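/- Latent Gaussian process model with Cauchy observation errors: let p ≥ 1, let Σ be a real symmetric positive-definite p × p matrix, and fix y ∈ ℝ^p. For θ ∈ ℝ define on ℝ^p the unnormalised non-centred posterior density g_θ(x̃) = [∏_{i=1}^p 1/(π(1 + (y_i − x̃_i − θ)²))]·exp(−(1/2)·x̃ᵀ Σ^{−1} x̃), and let c_θ = ∫_{ℝ^p} g_θ(x̃) dx̃. Then the model is robust in data (RID): for every x̃ ∈ ℝ^p, g_θ(x̃)/c_θ → exp(−(1/2)·x̃ᵀ Σ^{−1} x̃) / ∫_{ℝ^p} exp(−(1/2)·uᵀ Σ^{−1} u) du as |θ| → ∞; that is, the conditional law of the non-centred missing data X̃ = X − 1θ given Y = y and Θ = θ converges to the N_p(0, Σ) distribution. -/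

import Mathlib

open MeasureTheory Filter

noncomputable section

/-- Unnormalised non-centred posterior density of the latent Gaussian process model with
Cauchy observation errors: Cauchy likelihood factors times the `N_p(0, Σ)` prior. -/
def gDens (p : ℕ) (S : Matrix (Fin p) (Fin p) ℝ) (y : Fin p → ℝ) (θ : ℝ)
    (xt : Fin p → ℝ) : ℝ :=
  (∏ i, 1 / (Real.pi * (1 + (y i - xt i - θ) ^ 2))) *
    Real.exp (-(1 / 2) * dotProduct xt (Matrix.mulVec S⁻¹ xt))

theorem aux_quad (p : ℕ) (A : Matrix (Fin p) (Fin p) ℝ) (hA : A.PosDef) :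
    ∃ c : ℝ, 0 < c ∧ ∀ u : Fin p → ℝ, c * ∑ i, u i ^ 2 ≤ dotProduct u (Matrix.mulVec A u) := by
  have hcont : Continuous fun u : Fin p → ℝ => dotProduct u (Matrix.mulVec A u) := by
    simp only [dotProduct, Matrix.mulVec]
    fun_prop
  have hpos : ∀ u : Fin p → ℝ, u ≠ 0 → 0 < dotProduct u (Matrix.mulVec A u) := by
    intro u hu
    simpa using hA.dotProduct_mulVec_pos hu
  have hm : ∃ m : ℝ, 0 < m ∧ ∀ u ∈ Metric.sphere (0 : Fin p → ℝ) 1,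
      m ≤ dotProduct u (Matrix.mulVec A u) := by
    rcases (Metric.sphere (0 : Fin p → ℝ) 1).eq_empty_or_nonempty with h | h
    · exact ⟨1, one_pos, by simp [h]⟩
    · obtain ⟨v, hv, hmin⟩ := (isCompact_sphere (0 : Fin p → ℝ) 1).exists_isMinOn h
        hcont.continuousOn
      refine ⟨_, hpos v ?_, fun u hu => hmin hu⟩
      rintro rfl
      simp at hv
  obtain ⟨m, hm0, hm⟩ := hm
  refine ⟨m / (p + 1), by positivity, fun u => ?_⟩
  by_cases hu : u = 0
  · simp [hu]
  have hn : 0 < ‖u‖ := norm_pos_iff.mpr hu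
  have h1 := hm (‖u‖⁻¹ • u) (by simp [norm_smul, hn.ne'])
  rw [Matrix.mulVec_smul, dotProduct_smul, smul_dotProduct, smul_eq_mul, smul_eq_mul] at h1
  have h2 : m * ‖u‖ ^ 2 ≤ dotProduct u (Matrix.mulVec A u) := by
    have := mul_le_mul_of_nonneg_right h1 (sq_nonneg ‖u‖)
    field_simp at this
    linarith
  have h3 : ∑ i, u i ^ 2 ≤ p * ‖u‖ ^ 2 := by
    calc ∑ i, u i ^ 2 ≤ ∑ _i : Fin p, ‖u‖ ^ 2 := by
          refine Finset.sum_le_sum fun i _ => ?_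
          have := norm_le_pi_norm u i
          rw [Real.norm_eq_abs] at this
          exact sq_le_sq' (by linarith [neg_abs_le (u i)]) (by linarith [le_abs_self (u i)])
      _ = _ := by simp
  calc m / (p + 1) * ∑ i, u i ^ 2 ≤ m / (p + 1) * ((p + 1) * ‖u‖ ^ 2) := by
        gcongr
        nlinarith [sq_nonneg ‖u‖]
    _ = m * ‖u‖ ^ 2 := by field_simp
    _ ≤ _ := h2

theorem aux_lim (a : ℝ) :
    Tendsto (fun θ : ℝ => (1 + θ ^ 2) / (1 + (a - θ) ^ 2)) (cocompact ℝ) (nhds 1) := by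
  have h1 : Tendsto (fun s : ℝ => (s ^ 2 + 1) / (s ^ 2 + (a * s - 1) ^ 2)) (nhds 0) (nhds 1) := by
    have : ContinuousAt (fun s : ℝ => (s ^ 2 + 1) / (s ^ 2 + (a * s - 1) ^ 2)) 0 := by
      apply ContinuousAt.div (by fun_prop) (by fun_prop)
      norm_num
    simpa [ContinuousAt] using this
  have h2 := h1.comp (Metric.cobounded_eq_cocompact (α := ℝ) ▸ tendsto_inv₀_cobounded (α := ℝ))
  refine h2.congr' ?_
  have h0 : ∀ᶠ θ in cocompact ℝ, θ ≠ (0 : ℝ) := by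
    have := (isCompact_singleton (x := (0 : ℝ))).compl_mem_cocompact
    filter_upwards [this] with θ hθ using hθ
  filter_upwards [h0] with θ hθ
  have e1 : (1 + (a - θ) ^ 2) ≠ 0 := by positivity
  have e2 : θ⁻¹ ^ 2 + (a * θ⁻¹ - 1) ^ 2 ≠ 0 := by
    have : 0 < θ⁻¹ ^ 2 := by positivity
    positivity
  simp only [Function.comp]
  rw [div_eq_div_iff e2 e1]
  field_simp

theorem aux_int (c b : ℝ) (hc : 0 < c) :
    Integrable fun x : ℝ => 2 * (1 + (b - x) ^ 2) * Real.exp (-c * x ^ 2) := by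
  have h0 := integrable_exp_neg_mul_sq hc
  have h1 := integrable_mul_exp_neg_mul_sq hc
  have h2 := integrable_rpow_mul_exp_neg_mul_sq hc (s := 2) (by norm_num)
  have := ((h0.const_mul (2 * (1 + b ^ 2))).add (h1.const_mul (-4 * b))).add (h2.const_mul 2)
  refine this.congr (ae_of_all _ fun x => ?_)
  simp only [Pi.add_apply, Real.rpow_two]
  ring

theorem aux_bd (a θ : ℝ) : (1 + θ ^ 2) / (1 + (a - θ) ^ 2) ≤ 2 * (1 + a ^ 2) := by
  rw [div_le_iff₀ (by positivity)]
  nlinarith [sq_nonneg (a * (a - θ)), sq_nonneg (2 * a - θ)]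

/-- the latent Gaussian process model with Cauchy observation errors is
robust in data (RID): as `|θ| → ∞`, the conditional posterior density of the non-centred
missing data `X̃ = X - 1θ` converges pointwise to the `N_p(0, Σ)` density. -/
theorem latent_gaussian_cauchy_rid (p : ℕ) (hp : 1 ≤ p)
    (S : Matrix (Fin p) (Fin p) ℝ) (hS : S.PosDef) (y : Fin p → ℝ) :
    ∀ xt : Fin p → ℝ,
      Tendsto (fun θ => gDens p S y θ xt / ∫ u : Fin p → ℝ, gDens p S y θ u)
        (cocompact ℝ)
        (nhds (Real.exp (-(1 / 2) * dotProduct xt (Matrix.mulVec S⁻¹ xt)) /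
          ∫ u : Fin p → ℝ,
            Real.exp (-(1 / 2) * dotProduct u (Matrix.mulVec S⁻¹ u)))) := by
  intro xt
  obtain ⟨c, hc, hq⟩ := aux_quad p S⁻¹ hS.inv
  set E : (Fin p → ℝ) → ℝ :=
    fun u => Real.exp (-(1 / 2) * dotProduct u (Matrix.mulVec S⁻¹ u)) with hE
  have hEc : Continuous E := by
    simp only [hE, dotProduct, Matrix.mulVec]
    fun_prop
  let B : (Fin p → ℝ) → ℝ := fun u => ∏ i, 2 * (1 + (y i - u i) ^ 2) * Real.exp (-(c / 2) * u i ^ 2)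
  have hB : Integrable B := by
    exact Integrable.fintype_prod (f := fun i x => 2 * (1 + (y i - x) ^ 2) * Real.exp (-(c / 2) * x ^ 2))
      (fun i => aux_int (c / 2) (y i) (by positivity))
  have hEB : ∀ u, E u ≤ ∏ i, Real.exp (-(c / 2) * u i ^ 2) := by
    intro u
    rw [← Real.exp_sum, ← Finset.mul_sum]
    apply Real.exp_le_exp.mpr
    linarith [hq u]
  let H : ℝ → (Fin p → ℝ) → ℝ :=
    fun θ u => (∏ i, (1 + θ ^ 2) / (1 + (y i - u i - θ) ^ 2)) * E u
  have hHc : ∀ θ, Continuous (H θ) := by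
    intro θ
    refine Continuous.mul (continuous_finsetProd _ fun i _ => ?_) hEc
    exact Continuous.div (by fun_prop) (by fun_prop) (fun u => by positivity)
  have hHB : ∀ θ u, ‖H θ u‖ ≤ B u := by
    intro θ u
    have hn : 0 ≤ H θ u := mul_nonneg (Finset.prod_nonneg fun i _ => by positivity)
      (Real.exp_pos _).le
    rw [Real.norm_of_nonneg hn]
    simp only [H, B]
    rw [Finset.prod_mul_distrib]
    exact mul_le_mul (Finset.prod_le_prod (fun i _ => by positivity) fun i _ => aux_bd _ _)
      (hEB u) (Real.exp_pos _).le (Finset.prod_nonneg fun i _ => by positivity)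
  have hlim : ∀ u, Tendsto (fun θ => H θ u) (cocompact ℝ) (nhds (E u)) := by
    intro u
    have h1 := tendsto_finsetProd (Finset.univ : Finset (Fin p))
      (fun i _ => aux_lim (y i - u i))
    have h2 := h1.mul_const (E u)
    rw [Finset.prod_const_one, one_mul] at h2
    exact h2
  have hEi : Integrable E := by
    refine hB.mono' hEc.aestronglyMeasurable (ae_of_all _ fun u => ?_)
    rw [Real.norm_of_nonneg (Real.exp_pos _).le]
    refine (hEB u).trans (Finset.prod_le_prod (fun i _ => (Real.exp_pos _).le) fun i _ => ?_)
    exact le_mul_of_one_le_left (Real.exp_pos _).le (by nlinarith [sq_nonneg (y i - u i)])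
  have hEpos : 0 < ∫ u, E u := integral_exp_pos hEi
  have hint : Tendsto (fun θ => ∫ u, H θ u) (cocompact ℝ) (nhds (∫ u, E u)) := by
    have : (cocompact ℝ).IsCountablyGenerated := by
      rw [cocompact_eq_atBot_atTop]
      infer_instance
    exact tendsto_integral_filter_of_dominated_convergence B
      (Eventually.of_forall fun θ => (hHc θ).aestronglyMeasurable)
      (Eventually.of_forall fun θ => ae_of_all _ (hHB θ)) hB (ae_of_all _ hlim)
  refine ((hlim xt).div hint hEpos.ne').congr fun θ => ?_
  have hW : ∀ u, H θ u = (∏ _i : Fin p, Real.pi * (1 + θ ^ 2)) * gDens p S y θ u := by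
    intro u
    simp only [H, gDens, hE]
    rw [← mul_assoc, ← Finset.prod_mul_distrib]
    congr 1
    refine Finset.prod_congr rfl fun i _ => ?_
    have : 1 + (y i - u i - θ) ^ 2 ≠ 0 := by positivity
    have := Real.pi_ne_zero
    field_simp
  have hI : ∫ u, H θ u = (∏ _i : Fin p, Real.pi * (1 + θ ^ 2)) * ∫ u, gDens p S y θ u := by
    rw [← integral_const_mul]
    exact integral_congr_ae (ae_of_all _ hW)
  change H θ xt / (∫ u, H θ u) = _
  rw [hW, hI]
  refine mul_div_mul_left _ _ (Finset.prod_ne_zero_iff.mpr fun i _ => ?_)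
  have := Real.pi_pos
  positivity
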